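/- For all rational numbers q, q' ∈ (0,1/2): q ≤ q' if and only if σ²(c_q 0^∞) ≤₁ σ²(c_{q'} 0^∞) in the unimodal order, where c_q 0^∞ denotes the word c_q followed by infinitely many 0's and σ² deletes the first two symbols. (This is the symbolic content of the nesting of the pruning domains of the star homoclinic horseshoe orbits: D_q ⊆ D_{q'} if and only if q ≥ q'.) -/

import Mathlib

/-!
The unimodal order becomes a plain lexicographic order after passing to parities: if `p k` is the
parity of the number of `1`'s among the first `k` symbols of `s`, and `p'` the same for `s'`, then
`s' >₁ s` holds exactly when at the first index where `p` and `p'` differ `p'` is `1` and `p` is `0`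
(the direction needed is `unimodalGT_of_parity`).

For `q = m/n`, the `1`'s of `σ²(c_q 0^∞)` come in adjacent pairs at `⌊kn/m⌋, ⌊kn/m⌋ + 1` for
`0 < k < m`, followed by a single `1` at `n` (positions in `c_q`). Hence the parity through
position `i` is `1` iff `n ≤ i` or `i = ⌊kn/m⌋` for some `k ≥ 1`; this is `nbtPar`, and
`wordSeq_nbt` is the resulting formula for the symbols.

The number of positions `j < i` of the form `⌊kn/m⌋`, `k ≥ 1`, is the number of `k ≥ 1` with
`kn < mi`, namely `nbtCount m n i`, which is monotone in `m/n`. So for `q < q'` the first difference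
between the two parity sequences, if it comes before position `n`, has the `1` on the side of `q'`.
It does come before position `n`: if `n ≤ n'`, then among positions below `n` the count for `q` is
`m - 1`, while the count for `q'` is at least `m`; if `n' < n`, the parities at position `n - 1` are
`0` for `q` and `1` for `q'`. See `exists_first_diff`. Asymmetry of `>₁` then gives both
directions of the equivalence.
-/

/-- The sequence `u^∞ : ℕ → Bool`, the infinite repetition of the finite word `u`. -/
def periodicSeq (u : List Bool) : ℕ → Bool := fun n => u.getD (n % u.length) false

/-- The sequence given by the finite word `u` followed by the infinite tail `t`. -/
def wordSeq (u : List Bool) (t : ℕ → Bool) : ℕ → Bool :=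
  fun n => if h : n < u.length then u.get ⟨n, h⟩ else t (n - u.length)

/-- The sequence `0^∞` of all zeros. -/
def zeroSeq : ℕ → Bool := fun _ => false

/-- `s >₁ t` in the unimodal order: at the least index `k` where they differ,
`s k > t k` if the number of 1's before `k` is even, and `s k < t k` otherwise. -/
def unimodalGT (s t : ℕ → Bool) : Prop :=
  ∃ k : ℕ, (∀ i < k, s i = t i) ∧ s k ≠ t k ∧
    (if Even (((Finset.range k).filter (fun i => s i = true)).card)
      then s k = true else t k = true)

/-- `s ≥₁ t` in the unimodal order. -/
def unimodalGE (s t : ℕ → Bool) : Prop := s = t ∨ unimodalGT s t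

/-- `s ≤₁ t` in the unimodal order. -/
def unimodalLE (s t : ℕ → Bool) : Prop := s = t ∨ unimodalGT t s

/-- A finite word `u` is a maximal code if `σ^i(u^∞) ≤₁ u^∞` for all `i ≥ 1`. -/
def maximalCode (u : List Bool) : Prop :=
  ∀ i ≥ 1, unimodalLE (fun n => periodicSeq u (n + i)) (periodicSeq u)

/-- A finite word `w` is a maximal decoration if both `w0` and `w1` are maximal codes. -/
def maximalDecoration (w : List Bool) : Prop :=
  maximalCode (w ++ [false]) ∧ maximalCode (w ++ [true])

/-- The `i`-th symbol of the NBT code of `m/n`: it is `1` iff the segment from `(0,0)` to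
`(n,m)` meets a horizontal line `y = k`, `k ∈ ℤ`, at a point with x-coordinate in `(i-1,i+1)`;
equivalently iff there is `0 ≤ k ≤ m` with `m(i-1) < kn < m(i+1)`. -/
def nbtBit (m n i : ℕ) : Bool :=
  decide (∃ k : Fin (m + 1),
    (m : ℤ) * ((i : ℤ) - 1) < ((k : ℕ) : ℤ) * (n : ℤ) ∧
      ((k : ℕ) : ℤ) * (n : ℤ) < (m : ℤ) * ((i : ℤ) + 1))

/-- The NBT code `c_q = s₀s₁⋯s_n` of `q = m/n`. -/
def nbtCode (m n : ℕ) : List Bool := List.ofFn (fun i : Fin (n + 1) => nbtBit m n i)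

/-- The NBT code of a rational number `q`, written in lowest terms. -/
def nbtCodeQ (q : ℚ) : List Bool := nbtCode q.num.toNat q.den

/-! ### The unimodal order through parities -/

lemma unimodalGT_irrefl (s : ℕ → Bool) : ¬ unimodalGT s s := by
  rintro ⟨k, _, h, _⟩
  exact h rfl

lemma unimodalGT_asymm {s t : ℕ → Bool} (h : unimodalGT s t) : ¬ unimodalGT t s := by
  rintro ⟨l, hl, hne', hl'⟩
  obtain ⟨k, hk, hne, hk'⟩ := h
  rcases lt_trichotomy k l with h | h | h
  · exact hne (hl k h).symm
  · subst h
    have e : (Finset.range k).filter (fun i => t i = true)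
        = (Finset.range k).filter (fun i => s i = true) := by
      apply Finset.filter_congr
      intro i hi
      rw [hk i (Finset.mem_range.1 hi)]
    rw [e] at hl'
    split_ifs at hk' hl' <;> simp_all
  · exact hne' (hk l h).symm

/-- If `s` is the sequence of increments mod 2 of `p`, then `p k` is the parity of the number of
`1`'s before index `k`. -/
lemma even_card_iff {s p : ℕ → Bool} (h0 : p 0 = false)
    (hs : ∀ k, s k = xor (p (k + 1)) (p k)) (k : ℕ) :
    Even ((Finset.range k).filter (fun i => s i = true)).card ↔ p k = false := by
  induction k with
  | zero => simp [h0]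
  | succ k ih =>
    rw [Finset.range_add_one, Finset.filter_insert]
    have hk := hs k
    cases h1 : p (k + 1) <;> cases h2 : p k <;> simp_all [Nat.even_add_one]

lemma unimodalGT_of_parity {s t p r : ℕ → Bool} (hp0 : p 0 = false)
    (hs : ∀ k, s k = xor (p (k + 1)) (p k)) (ht : ∀ k, t k = xor (r (k + 1)) (r k))
    (h : ∃ i, (∀ j < i, p j = r j) ∧ p i = true ∧ r i = false) : unimodalGT s t := by
  obtain ⟨i, hi, hpi, hri⟩ := h
  obtain ⟨k, rfl⟩ : ∃ k, i = k + 1 := by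
    refine Nat.exists_eq_succ_of_ne_zero ?_
    rintro rfl
    simp [hp0] at hpi
  have hk := hi k (by omega)
  refine ⟨k, fun j hj => ?_, ?_, ?_⟩
  · rw [hs, ht, hi j (by omega), hi (j + 1) (by omega)]
  · rw [hs, ht, hpi, hri, hk]
    simp
  · have he := even_card_iff hp0 hs k
    have hsk := hs k
    have htk := ht k
    rw [hpi, hk] at hsk
    rw [hri] at htk
    rw [hk] at he
    split_ifs with hev
    · simp [hsk, he.1 hev]
    · have hr : r k = true := Bool.eq_true_of_not_eq_false fun h => hev (he.2 h)
      simp [htk, hr]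

/-! ### Parities of NBT codes -/

/-- The condition that the number of `1`'s of `c_{m/n}` in positions `2, …, i` is odd: either
`i ≥ n`, or `i = ⌊kn/m⌋` for some `k ≥ 1`. -/
def nbtPar (m n i : ℕ) : Prop := n ≤ i ∨ ∃ k : ℕ, 1 ≤ k ∧ m * i ≤ k * n ∧ k * n < m * (i + 1)

/-- The number of integers `k ≥ 1` with `k * n < m * i`; the truncated subtraction gives the correct
value `0` when `m * i = 0`. -/
def nbtCount (m n i : ℕ) : ℕ := (m * i - 1) / n

lemma le_nbtCount {m n i k : ℕ} (hn : 0 < n) (hk : 1 ≤ k) :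
    k ≤ nbtCount m n i ↔ k * n < m * i := by
  unfold nbtCount
  rw [Nat.le_div_iff_mul_le hn]
  have : 0 < k * n := Nat.mul_pos hk hn
  omega

lemma nbtCount_succ_of_par {m n i : ℕ} (hmn : m < n) (hi : i < n) (h : nbtPar m n i) :
    nbtCount m n (i + 1) = nbtCount m n i + 1 := by
  have hn : 0 < n := by omega
  obtain h | ⟨k, hk, h1, h2⟩ := h
  · omega
  have a : k ≤ nbtCount m n (i + 1) := (le_nbtCount hn hk).2 h2
  have b : ¬ k ≤ nbtCount m n i := fun h => by
    have := (le_nbtCount hn hk).1 h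
    omega
  have c : ¬ nbtCount m n i + 2 ≤ nbtCount m n (i + 1) := fun h => by
    have h3 := (le_nbtCount hn (by omega)).1 h
    have h4 : ¬ nbtCount m n i + 1 ≤ nbtCount m n i := by omega
    rw [le_nbtCount hn (by omega)] at h4
    have : (nbtCount m n i + 2) * n = (nbtCount m n i + 1) * n + n := by ring
    have : m * (i + 1) = m * i + m := by ring
    omega
  omega

lemma nbtCount_succ_of_not_par {m n i : ℕ} (hmn : m < n) (h : ¬ nbtPar m n i) :
    nbtCount m n (i + 1) = nbtCount m n i := by
  have hn : 0 < n := by omega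
  have mono : nbtCount m n i ≤ nbtCount m n (i + 1) := by
    unfold nbtCount
    exact Nat.div_le_div_right (Nat.sub_le_sub_right (Nat.mul_le_mul_left _ (by omega)) _)
  refine le_antisymm ?_ mono
  by_contra hlt
  have h3 := (le_nbtCount (m := m) (k := nbtCount m n i + 1) (i := i + 1) hn (by omega)).1 (by omega)
  have h4 : ¬ nbtCount m n i + 1 ≤ nbtCount m n i := by omega
  rw [le_nbtCount hn (by omega)] at h4
  exact h (Or.inr ⟨_, by omega, by omega, h3⟩)

lemma nbtCount_eq_of_agree {m n m' n' : ℕ} (hmn : m < n) (hmn' : m' < n') (i : ℕ)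
    (hi : i ≤ n) (hi' : i ≤ n') (h : ∀ j < i, (nbtPar m n j ↔ nbtPar m' n' j)) :
    nbtCount m n i = nbtCount m' n' i := by
  induction i with
  | zero => simp [nbtCount]
  | succ i ih =>
    have e := ih (by omega) (by omega) (fun j hj => h j (by omega))
    by_cases hp : nbtPar m n i
    · rw [nbtCount_succ_of_par hmn (by omega) hp,
        nbtCount_succ_of_par hmn' (by omega) ((h i (by omega)).1 hp), e]
    · rw [nbtCount_succ_of_not_par hmn hp,
        nbtCount_succ_of_not_par hmn' (fun h' => hp ((h i (by omega)).2 h')), e]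

lemma nbtCount_mono {m n m' n' : ℕ} (hn : 0 < n) (hn' : 0 < n') (hlt : m * n' < m' * n) (i : ℕ) :
    nbtCount m n i ≤ nbtCount m' n' i := by
  rcases Nat.eq_zero_or_pos (nbtCount m n i) with h0 | hpos
  · omega
  rw [le_nbtCount hn' hpos]
  have h := (le_nbtCount hn hpos).1 le_rfl
  have h1 : nbtCount m n i * n * n' < m * i * n' := Nat.mul_lt_mul_of_pos_right h hn'
  have h2 : m * n' * i ≤ m' * n * i := Nat.mul_le_mul_right _ hlt.le
  have h3 : (nbtCount m n i * n') * n < (m' * i) * n := by nlinarith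
  exact lt_of_mul_lt_mul_right h3 (Nat.zero_le _)

/-- The parity sequences of `m/n < m'/n'` with `n ≤ n'` already differ before position `n`. -/
lemma not_agree_below {m n m' n' : ℕ} (hm : 0 < m) (hmn : m < n) (hmn' : m' < n')
    (hlt : m * n' < m' * n) (hnn : n ≤ n') :
    ¬ ∀ j < n, (nbtPar m n j ↔ nbtPar m' n' j) := by
  intro h
  have e := nbtCount_eq_of_agree hmn hmn' n le_rfl hnn h
  have a : m ≤ nbtCount m' n' n := (le_nbtCount (by omega) hm).2 hlt
  rw [← e, le_nbtCount (by omega) hm] at a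
  omega

lemma exists_first_diff {m n m' n' : ℕ} (hm : 0 < m) (hmn : m < n)
    (hmn' : m' < n') (hlt : m * n' < m' * n) :
    ∃ i, (∀ j < i, (nbtPar m n j ↔ nbtPar m' n' j)) ∧ ¬ nbtPar m n i ∧ nbtPar m' n' i := by
  classical
  have hex : ∃ i, ¬ (nbtPar m n i ↔ nbtPar m' n' i) := by
    by_contra hcon
    push Not at hcon
    rcases Nat.lt_or_ge n' n with h | h
    · -- Position `n - 1` has parity `0` for `m/n`, but parity `1` for `m'/n'`.
      have h1 : nbtPar m n (n - 1) := (hcon _).2 (Or.inl (by omega))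
      obtain h1 | ⟨k, -, h1, h2⟩ := h1
      · omega
      rw [Nat.sub_add_cancel (by omega)] at h2
      have hk : k < m := lt_of_mul_lt_mul_right h2 (Nat.zero_le _)
      have h3 : (k + 1) * n ≤ m * n := Nat.mul_le_mul_right _ hk
      have h4 : m * (n - 1) + m = m * n := by
        rw [← Nat.mul_succ, Nat.succ_eq_add_one, Nat.sub_add_cancel (by omega)]
      have h5 : (k + 1) * n = k * n + n := by ring
      omega
    · exact not_agree_below hm hmn hmn' hlt h (fun j _ => hcon j)
  have hi := Nat.find_spec hex
  have hmin : ∀ j < Nat.find hex, (nbtPar m n j ↔ nbtPar m' n' j) :=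
    fun j hj => not_not.1 (Nat.find_min hex hj)
  generalize Nat.find hex = i at hi hmin
  refine ⟨i, hmin, ?_⟩
  by_contra hno
  obtain ⟨hP, hP'⟩ : nbtPar m n i ∧ ¬ nbtPar m' n' i := by
    by_cases a : nbtPar m n i <;> by_cases b : nbtPar m' n' i <;> simp_all
  have hin' : i < n' := by
    by_contra h
    exact hP' (Or.inl (by omega))
  rcases Nat.lt_or_ge i n with h | h
  · have e := nbtCount_eq_of_agree hmn hmn' i h.le hin'.le hmin
    have e1 := nbtCount_succ_of_par hmn h hP
    have e2 := nbtCount_succ_of_not_par hmn' hP'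
    have := nbtCount_mono (by omega) (by omega) hlt (i + 1)
    omega
  · exact not_agree_below hm hmn hmn' hlt (by omega) (fun j hj => hmin j (by omega))

lemma not_nbtPar_one {m n : ℕ} (hm : 0 < m) (h2 : 2 * m < n) : ¬ nbtPar m n 1 := by
  rintro (h | ⟨k, hk, -, h⟩)
  · omega
  · have : 1 * n ≤ k * n := Nat.mul_le_mul_right _ hk
    omega

/-! ### The symbols of NBT codes -/

lemma nbtBit_eq_true_iff {m n i : ℕ} : nbtBit m n i = true ↔
    ∃ k ≤ m, m * i < k * n + m ∧ k * n < m * (i + 1) := by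
  unfold nbtBit
  rw [decide_eq_true_iff]
  constructor
  · rintro ⟨k, h1, h2⟩
    refine ⟨k, by omega, ?_, by exact_mod_cast h2⟩
    zify
    linarith
  · rintro ⟨k, hk, h1, h2⟩
    refine ⟨⟨k, by omega⟩, ?_, by exact_mod_cast h2⟩
    zify at h1
    simp only
    linarith

lemma nbtBit_iff_of_lt {m n i : ℕ} (hm : 0 < m) (hc : m.Coprime n) (hi1 : 1 ≤ i)
    (hi : i + 1 < n) :
    nbtBit m n (i + 1) = true ↔ nbtPar m n (i + 1) ∨ nbtPar m n i := by
  rw [nbtBit_eq_true_iff]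
  have e1 : m * (i + 1) = m * i + m := by ring
  constructor
  · rintro ⟨k, hk, h1, h2⟩
    have hk1 : 1 ≤ k := by
      by_contra h
      have : k = 0 := by omega
      subst this
      have := Nat.mul_pos hm hi1
      omega
    rcases Nat.lt_or_ge (k * n) (m * (i + 1)) with h | h
    · exact Or.inr (Or.inr ⟨k, hk1, by omega, h⟩)
    · exact Or.inl (Or.inr ⟨k, hk1, h, h2⟩)
  · have hle : ∀ k, k * n < m * (i + 1 + 1) → k ≤ m := fun k h => by
      have : m * (i + 1 + 1) ≤ m * n := Nat.mul_le_mul_left _ (by omega)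
      exact (lt_of_mul_lt_mul_right (h.trans_le this) (Nat.zero_le _)).le
    have e2 : m * (i + 1 + 1) = m * i + m + m := by ring
    rintro ((h | ⟨k, hk, h1, h2⟩) | (h | ⟨k, hk, h1, h2⟩))
    · omega
    · exact ⟨k, hle k h2, by omega, h2⟩
    · omega
    · refine ⟨k, hle k (by omega), ?_, by omega⟩
      -- The line `y = k` is crossed strictly to the right of `i`, by coprimality.
      have hne : m * i ≠ k * n := fun h => by
        have hd : n ∣ m * i := ⟨k, by rw [h, mul_comm]⟩
        have := Nat.le_of_dvd (by omega) (hc.symm.dvd_of_dvd_mul_left hd)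
        omega
      omega

/-- Since `n/m > 2`, consecutive values of `⌊kn/m⌋` differ by at least `2`. -/
lemma not_nbtPar_consecutive {m n i : ℕ} (hm : 0 < m) (h2 : 2 * m < n) (hi : i + 1 ≤ n)
    (h : nbtPar m n i) (h' : nbtPar m n (i + 1)) : False := by
  have e1 : m * (i + 1) = m * i + m := by ring
  have e2 : m * (i + 1 + 1) = m * i + m + m := by ring
  obtain h | ⟨k, -, a1, a2⟩ := h
  · omega
  have key : ∀ l, m * (i + 1) ≤ l * n → l * n < m * (i + 1 + 1) → False := fun l b1 b2 => by
    have hkl : k < l := lt_of_mul_lt_mul_right (a2.trans_le b1) (Nat.zero_le _)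
    have h3 : (k + 1) * n ≤ l * n := Nat.mul_le_mul_right _ hkl
    have h5 : (k + 1) * n = k * n + n := by ring
    omega
  obtain h' | ⟨l, -, b1, b2⟩ := h'
  · have he : n = i + 1 := by omega
    exact key m (by rw [← he]) (by rw [he]; exact Nat.mul_lt_mul_of_pos_left (by omega) hm)
  · exact key l b1 b2

open Classical in
/-- The parity sequence of `σ²(c_{m/n} 0^∞)`, indexed so that entry `k` counts the first `k`
symbols, that is, positions `2, …, k + 1` of `c_{m/n}`. -/
noncomputable def nbtParSeq (m n : ℕ) : ℕ → Bool := fun k => decide (nbtPar m n (k + 1))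

lemma wordSeq_nbt {m n : ℕ} (hm : 0 < m) (h2 : 2 * m < n) (hc : m.Coprime n) (k : ℕ) :
    wordSeq (nbtCode m n) zeroSeq (k + 2)
      = xor (nbtParSeq m n (k + 1)) (nbtParSeq m n k) := by
  have hw : wordSeq (nbtCode m n) zeroSeq (k + 2)
      = if k + 2 < n + 1 then nbtBit m n (k + 2) else false := by
    unfold wordSeq nbtCode zeroSeq
    simp
  rw [hw]
  unfold nbtParSeq
  rcases lt_trichotomy (k + 2) n with h | h | h
  · rw [if_pos (by omega)]
    have hb := nbtBit_iff_of_lt (i := k + 1) hm hc (by omega) h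
    have hx := not_nbtPar_consecutive (i := k + 1) hm h2 h.le
    rw [Bool.eq_iff_iff]
    by_cases hA : nbtPar m n (k + 1) <;> by_cases hB : nbtPar m n (k + 1 + 1) <;>
      simp_all
  · rw [if_pos (by omega)]
    have hx := not_nbtPar_consecutive (i := k + 1) hm h2 h.le
    have hB : nbtPar m n (k + 1 + 1) := Or.inl (by omega)
    have hA : ¬ nbtPar m n (k + 1) := fun hA => hx hA hB
    have hb : nbtBit m n (k + 2) = true := by
      rw [nbtBit_eq_true_iff, h]
      exact ⟨m, le_rfl, by omega, Nat.mul_lt_mul_of_pos_left (by omega) hm⟩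
    simp [hA, hB, hb]
  · rw [if_neg (by omega)]
    have hB : nbtPar m n (k + 1 + 1) := Or.inl (by omega)
    have hA : nbtPar m n (k + 1) := Or.inl (by omega)
    simp [hA, hB]

lemma nbt_unimodalGT {m n m' n' : ℕ} (hm : 0 < m) (h2 : 2 * m < n) (hc : m.Coprime n)
    (hm' : 0 < m') (h2' : 2 * m' < n') (hc' : m'.Coprime n') (hlt : m * n' < m' * n) :
    unimodalGT (fun k => wordSeq (nbtCode m' n') zeroSeq (k + 2))
      (fun k => wordSeq (nbtCode m n) zeroSeq (k + 2)) := by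
  refine unimodalGT_of_parity (p := nbtParSeq m' n') (r := nbtParSeq m n)
    (by simp [nbtParSeq, not_nbtPar_one hm' h2'])
    (wordSeq_nbt hm' h2' hc') (wordSeq_nbt hm h2 hc) ?_
  obtain ⟨i, hi, h1, h3⟩ := exists_first_diff hm (by omega) (by omega) hlt
  obtain ⟨j, rfl⟩ : ∃ j, i = j + 1 := by
    refine Nat.exists_eq_succ_of_ne_zero ?_
    rintro rfl
    obtain h3 | ⟨k, hk, -, h3⟩ := h3
    · omega
    · have : 1 * n' ≤ k * n' := Nat.mul_le_mul_right _ hk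
      omega
  refine ⟨j, fun l hl => ?_, by simp [nbtParSeq, h3], by simp [nbtParSeq, h1]⟩
  simp [nbtParSeq, hi (l + 1) (by omega)]

lemma nbtCodeQ_unimodalGT {q q' : ℚ} (hq0 : 0 < q) (hq'1 : q' < 1 / 2) (hlt : q < q') :
    unimodalGT (fun k => wordSeq (nbtCodeQ q') zeroSeq (k + 2))
      (fun k => wordSeq (nbtCodeQ q) zeroSeq (k + 2)) := by
  have facts : ∀ r : ℚ, 0 < r → r < 1 / 2 →
      0 < r.num.toNat ∧ 2 * r.num.toNat < r.den ∧ r.num.toNat.Coprime r.den := by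
    intro r h0 h1
    have hn : 0 < r.num := Rat.num_pos.2 h0
    refine ⟨by omega, ?_, ?_⟩
    · have h3 : r.num * (1 / 2 : ℚ).den < (1 / 2 : ℚ).num * r.den := Rat.lt_iff _ _ |>.1 h1
      norm_num at h3
      omega
    · have := r.reduced
      rwa [show r.num.natAbs = r.num.toNat by omega] at this
  obtain ⟨a1, a2, a3⟩ := facts q hq0 (hlt.trans hq'1)
  obtain ⟨b1, b2, b3⟩ := facts q' (hq0.trans hlt) hq'1
  refine nbt_unimodalGT a1 a2 a3 b1 b2 b3 ?_
  have h := Rat.lt_iff _ _ |>.1 hlt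
  zify
  rwa [Int.toNat_of_nonneg (by omega), Int.toNat_of_nonneg (by omega)]

/-- for `q, q' ∈ (0,1/2)` rational, `q ≤ q'` iff
`σ²(c_q 0^∞) ≤₁ σ²(c_{q'} 0^∞)` in the unimodal order. -/
theorem nbt_shifted_tail_code_order (q q' : ℚ) (hq0 : 0 < q) (hq1 : q < 1 / 2)
    (hq'0 : 0 < q') (hq'1 : q' < 1 / 2) :
    q ≤ q' ↔
      unimodalLE (fun k => wordSeq (nbtCodeQ q) zeroSeq (k + 2))
        (fun k => wordSeq (nbtCodeQ q') zeroSeq (k + 2)) := by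
  constructor
  · intro h
    rcases h.eq_or_lt with rfl | h
    · exact Or.inl rfl
    · exact Or.inr (nbtCodeQ_unimodalGT hq0 hq'1 h)
  · intro h
    by_contra hlt
    have hgt := nbtCodeQ_unimodalGT hq'0 hq1 (not_le.1 hlt)
    rcases h with h | h
    · rw [h] at hgt
      exact unimodalGT_irrefl _ hgt
    · exact unimodalGT_asymm hgt h
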